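/- Let ℓ : [0,∞) → [0,∞) be nondecreasing and right-continuous with ℓ(0) = 0, with generalized inverse ℓ⁻¹(t) := inf{s ≥ 0 : ℓ(s) > t} ∈ [0,∞] (inf ∅ = ∞), and let Λ be the associated Lebesgue–Stieltjes measure, characterized by Λ((a,b]) = ℓ(b) − ℓ(a) for 0 ≤ a < b. Then for every bounded Borel function F : (0,∞) → ℝ (extended by 0 at ∞) and every t ≥ 0, ∫_0^{ℓ(t)} F(ℓ⁻¹(s)) ds = ∫_{(0,t]} F dΛ. -/

import Mathlib

open MeasureTheory
open scoped ENNReal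

/-- The generalized (right-continuous) inverse `ℓ⁻¹(t) = inf {s ≥ 0 : ℓ(s) > t}`,
with values in `[0,∞]` and the convention `inf ∅ = ∞`. -/
noncomputable def linv (ℓ : ℝ → ℝ) (t : ℝ) : ℝ≥0∞ :=
  sInf {x : ℝ≥0∞ | ∃ s : ℝ, 0 ≤ s ∧ x = ENNReal.ofReal s ∧ t < ℓ s}

/-!
For fixed `r ≥ 0`, the condition `ℓ⁻¹(s) ≤ r` means `s < ℓ r`, except possibly at the single point
`s = ℓ r`, which is Lebesgue-null. Hence `ℓ⁻¹` pushes Lebesgue measure on `(ℓ a, ℓ b]` forward to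
`Λ` on `(a, b]`, since both have the same distribution function.
-/

section

variable {ℓ : ℝ → ℝ} {Λ : Measure ℝ}

theorem linv_monotone (ℓ : ℝ → ℝ) : Monotone (linv ℓ) := by
  intro s t hst
  refine sInf_le_sInf ?_
  rintro x ⟨u, hu, hx, hlt⟩
  exact ⟨u, hu, hx, hst.trans_lt hlt⟩

theorem linv_le_ofReal_of_lt {r s : ℝ} (hr : 0 ≤ r) (h : s < ℓ r) :
    linv ℓ s ≤ ENNReal.ofReal r :=
  sInf_le ⟨r, hr, rfl, h⟩

theorem lt_of_linv_lt_ofReal (hmono : MonotoneOn ℓ (Set.Ici 0)) {r s : ℝ}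
    (h : linv ℓ s < ENNReal.ofReal r) : s < ℓ r := by
  obtain ⟨_, ⟨u, hu, rfl, hsu⟩, hur⟩ := sInf_lt_iff.1 h
  have hur : u < r := (ENNReal.ofReal_lt_ofReal_iff_of_nonneg hu).1 hur
  exact hsu.trans_le (hmono hu (hu.trans hur.le) hur.le)

theorem le_of_linv_le_ofReal (hmono : MonotoneOn ℓ (Set.Ici 0)) {r s : ℝ} (hr : 0 ≤ r)
    (hrc : ContinuousWithinAt ℓ (Set.Ici r) r) (h : linv ℓ s ≤ ENNReal.ofReal r) :
    s ≤ ℓ r := by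
  have hlim : Filter.Tendsto ℓ (nhdsWithin r (Set.Ioi r)) (nhds (ℓ r)) :=
    hrc.mono Set.Ioi_subset_Ici_self
  refine ge_of_tendsto hlim ?_
  filter_upwards [self_mem_nhdsWithin] with u (hu : r < u)
  have hru : ENNReal.ofReal r < ENNReal.ofReal u :=
    (ENNReal.ofReal_lt_ofReal_iff_of_nonneg hr).2 hu
  exact (lt_of_linv_lt_ofReal hmono (h.trans_lt hru)).le

theorem volume_Ioc_inter_linv_preimage_Iic (hmono : MonotoneOn ℓ (Set.Ici 0)) {b r : ℝ}
    (hb : 0 ≤ b) (hr : 0 ≤ r) (hrc : ContinuousWithinAt ℓ (Set.Ici r) r) (c : ℝ) :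
    volume (Set.Ioc c (ℓ b) ∩ linv ℓ ⁻¹' Set.Iic (ENNReal.ofReal r))
      = ENNReal.ofReal (ℓ (min b r) - c) := by
  have hmin : ℓ (min b r) = min (ℓ b) (ℓ r) := hmono.map_min hb hr
  have hsub : Set.Ioc c (ℓ b) ∩ linv ℓ ⁻¹' Set.Iic (ENNReal.ofReal r)
      ⊆ Set.Ioc c (ℓ (min b r)) := by
    rintro s ⟨⟨hcs, hsb⟩, hsr⟩
    exact ⟨hcs, hmin ▸ le_min hsb (le_of_linv_le_ofReal hmono hr hrc hsr)⟩
  have hsup : Set.Ioo c (ℓ (min b r))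
      ⊆ Set.Ioc c (ℓ b) ∩ linv ℓ ⁻¹' Set.Iic (ENNReal.ofReal r) := by
    rintro s ⟨hcs, hs⟩
    rw [hmin, lt_min_iff] at hs
    exact ⟨⟨hcs, hs.1.le⟩, linv_le_ofReal_of_lt hr hs.2⟩
  refine le_antisymm ?_ ?_
  · exact (measure_mono hsub).trans_eq Real.volume_Ioc
  · exact Real.volume_Ioo.symm.trans_le (measure_mono hsup)

theorem measure_Ioc_eq_ofReal_sub (hmono : MonotoneOn ℓ (Set.Ici 0))
    (hΛ : ∀ a b : ℝ, 0 ≤ a → a < b → Λ (Set.Ioc a b) = ENNReal.ofReal (ℓ b - ℓ a))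
    {a b : ℝ} (ha : 0 ≤ a) (hb : 0 ≤ b) :
    Λ (Set.Ioc a b) = ENNReal.ofReal (ℓ b - ℓ a) := by
  rcases lt_or_ge a b with hab | hba
  · exact hΛ a b ha hab
  · have hℓ : ℓ b ≤ ℓ a := hmono hb ha hba
    rw [Set.Ioc_eq_empty hba.not_gt, measure_empty, ENNReal.ofReal_of_nonpos (sub_nonpos.2 hℓ)]

theorem map_linv_volume_restrict_Ioc (hmono : MonotoneOn ℓ (Set.Ici 0))
    (hrc : ∀ a : ℝ, 0 ≤ a → ContinuousWithinAt ℓ (Set.Ici a) a)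
    (hΛ : ∀ a b : ℝ, 0 ≤ a → a < b → Λ (Set.Ioc a b) = ENNReal.ofReal (ℓ b - ℓ a))
    {a b : ℝ} (ha : 0 ≤ a) (hb : 0 ≤ b) :
    (volume.restrict (Set.Ioc (ℓ a) (ℓ b))).map (linv ℓ)
      = (Λ.restrict (Set.Ioc a b)).map ENNReal.ofReal := by
  refine Measure.ext_of_Iic _ _ fun x => ?_
  rw [Measure.map_apply (linv_monotone ℓ).measurable measurableSet_Iic,
    Measure.map_apply ENNReal.measurable_ofReal measurableSet_Iic,
    Measure.restrict_apply' measurableSet_Ioc, Measure.restrict_apply' measurableSet_Ioc,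
    Set.inter_comm _ (Set.Ioc (ℓ a) (ℓ b)), Set.inter_comm _ (Set.Ioc a b)]
  rcases eq_or_ne x ⊤ with rfl | hx
  · simp only [Set.Iic_top, Set.preimage_univ, Set.inter_univ, Real.volume_Ioc,
      measure_Ioc_eq_ofReal_sub hmono hΛ ha hb]
  obtain ⟨r, hr, rfl⟩ : ∃ r : ℝ, 0 ≤ r ∧ ENNReal.ofReal r = x :=
    ⟨x.toReal, ENNReal.toReal_nonneg, ENNReal.ofReal_toReal hx⟩
  have hIic : ENNReal.ofReal ⁻¹' Set.Iic (ENNReal.ofReal r) = Set.Iic r :=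
    Set.ext fun _ => ENNReal.ofReal_le_ofReal_iff hr
  rw [volume_Ioc_inter_linv_preimage_Iic hmono hb hr (hrc r hr), hIic, Set.Ioc_inter_Iic,
    measure_Ioc_eq_ofReal_sub hmono hΛ ha (le_min hb hr)]

theorem stmt_4_general {E : Type*} [NormedAddCommGroup E] [NormedSpace ℝ E]
    (hmono : MonotoneOn ℓ (Set.Ici 0))
    (hrc : ∀ a : ℝ, 0 ≤ a → ContinuousWithinAt ℓ (Set.Ici a) a)
    (hΛ : ∀ a b : ℝ, 0 ≤ a → a < b → Λ (Set.Ioc a b) = ENNReal.ofReal (ℓ b - ℓ a))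
    {a b : ℝ} (ha : 0 ≤ a) (hab : a ≤ b) {F : ℝ≥0∞ → E}
    (hF : AEStronglyMeasurable F ((Λ.restrict (Set.Ioc a b)).map ENNReal.ofReal)) :
    (∫ s in (ℓ a)..(ℓ b), F (linv ℓ s)) = ∫ s in Set.Ioc a b, F (ENNReal.ofReal s) ∂Λ := by
  have hb : 0 ≤ b := ha.trans hab
  have hmap := map_linv_volume_restrict_Ioc hmono hrc hΛ ha hb
  calc (∫ s in (ℓ a)..(ℓ b), F (linv ℓ s))
      = ∫ s in Set.Ioc (ℓ a) (ℓ b), F (linv ℓ s) :=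
        intervalIntegral.integral_of_le (hmono ha hb hab)
    _ = ∫ x, F x ∂(volume.restrict (Set.Ioc (ℓ a) (ℓ b))).map (linv ℓ) :=
        (integral_map (linv_monotone ℓ).measurable.aemeasurable (hmap ▸ hF)).symm
    _ = ∫ x, F x ∂(Λ.restrict (Set.Ioc a b)).map ENNReal.ofReal := by rw [hmap]
    _ = ∫ s in Set.Ioc a b, F (ENNReal.ofReal s) ∂Λ :=
        integral_map ENNReal.measurable_ofReal.aemeasurable hF

end

/-- Measure-theoretic change-of-variables formula (Lemma 4.3/4.4 of the paper):
if `Λ` is the Lebesgue–Stieltjes measure of a nondecreasing right-continuous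
`ℓ : [0,∞) → [0,∞)` with `ℓ(0) = 0`, i.e. `Λ((a,b]) = ℓ(b) - ℓ(a)` for `0 ≤ a < b`,
then for every bounded Borel `F` (extended by `0` at `∞`) and every `t ≥ 0`,
`∫_0^{ℓ(t)} F(ℓ⁻¹(s)) ds = ∫_{(0,t]} F dΛ`. -/
theorem stmt_4 (ℓ : ℝ → ℝ)
    (hmono : MonotoneOn ℓ (Set.Ici 0))
    (hrc : ∀ a : ℝ, 0 ≤ a → ContinuousWithinAt ℓ (Set.Ici a) a)
    (hℓ0 : ℓ 0 = 0) (hnonneg : ∀ t : ℝ, 0 ≤ t → 0 ≤ ℓ t)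
    (Λ : Measure ℝ)
    (hΛ : ∀ a b : ℝ, 0 ≤ a → a < b → Λ (Set.Ioc a b) = ENNReal.ofReal (ℓ b - ℓ a))
    (F : ℝ≥0∞ → ℝ) (hFmeas : Measurable F) (hFbdd : ∃ C, ∀ x, |F x| ≤ C)
    (hFtop : F ⊤ = 0)
    (t : ℝ) (ht : 0 ≤ t) :
    (∫ s in (0:ℝ)..(ℓ t), F (linv ℓ s))
      = ∫ s in Set.Ioc (0:ℝ) t, F (ENNReal.ofReal s) ∂Λ := by
  simpa only [hℓ0] using
    stmt_4_general hmono hrc hΛ le_rfl ht hFmeas.aestronglyMeasurable
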